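/- The subspace of W_{k₁,k₂} of vectors fixed by every element of ℤ² is zero if k₁ + k₂ is odd, and is one-dimensional, spanned by the monomial X^{k₁} ⊗ X^{k₂}, if k₁ + k₂ is even. -/

import Mathlib

noncomputable section

open MvPolynomial Matrix

/-- `V k`: the space of homogeneous polynomials of degree `k` in two variables `X = X 0`,
`Y = X 1`. -/
abbrev Vhom (k : ℕ) : Submodule ℂ (MvPolynomial (Fin 2) ℂ) :=
  homogeneousSubmodule (Fin 2) ℂ k

/-- Substitution of the variables by the linear forms determined by the *transpose* of `A`,
i.e. `X_i ↦ ∑ j, A j i • X j`; this is `P ↦ P ∘ Aᵗ`. -/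
def substMap (A : Matrix (Fin 2) (Fin 2) ℂ) :
    MvPolynomial (Fin 2) ℂ →ₐ[ℂ] MvPolynomial (Fin 2) ℂ :=
  aeval fun i => ∑ j : Fin 2, C (A j i) * X j

lemma substMap_isHomogeneous (A : Matrix (Fin 2) (Fin 2) ℂ) {k : ℕ}
    {p : MvPolynomial (Fin 2) ℂ} (hp : p.IsHomogeneous k) :
    (substMap A p).IsHomogeneous k := by
  have hg : ∀ i : Fin 2, ((fun i : Fin 2 => ∑ j : Fin 2, C (A j i) * X j) i).IsHomogeneous 1 := by
    intro i
    apply MvPolynomial.IsHomogeneous.sum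
    intro j _
    simpa using (MvPolynomial.isHomogeneous_X ℂ j).C_mul (A j i)
  rw [substMap]
  simpa using hp.aeval _ hg

/-- The representation `Sym^k` of `SL(2,ℂ)` on the space `Vhom k` of homogeneous polynomials of
degree `k`: the action of `A` is `P ↦ P ∘ Aᵗ`. -/
def SymSL (k : ℕ) (A : Matrix.SpecialLinearGroup (Fin 2) ℂ) : Vhom k →ₗ[ℂ] Vhom k :=
  ((substMap A.1).toLinearMap).restrict fun _p hp =>
    (MvPolynomial.mem_homogeneousSubmodule _ _).2
      (substMap_isHomogeneous A.1 ((MvPolynomial.mem_homogeneousSubmodule _ _).1 hp))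

open scoped TensorProduct

set_option synthInstance.maxHeartbeats 1000000
set_option maxHeartbeats 1000000

/-- The sign `(−1)^{ε(n₁,n₂)}`. -/
def sgn (ε : (ℤ × ℤ) →+ ZMod 2) (n : ℤ × ℤ) : ℂ := if ε n = 0 then 1 else -1

lemma rhoMat_det (cs : ℂ) (ε : (ℤ × ℤ) →+ ZMod 2) (n : ℤ × ℤ) :
    Matrix.det (sgn ε n • !![1, (n.1 : ℂ) + (n.2 : ℂ) * cs; 0, 1]) = 1 := by
  rw [Matrix.det_smul, Matrix.det_fin_two_of]
  rcases (show sgn ε n = 1 ∨ sgn ε n = -1 by unfold sgn; split_ifs <;> simp) with h | h <;>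
    rw [h] <;> norm_num

/-- The representation `ρ : ℤ² → SL₂(ℂ)`,
`ρ(n₁,n₂) = (−1)^{ε(n₁,n₂)} [[1, n₁ + n₂·cs],[0,1]]`. -/
def rhoSL (cs : ℂ) (ε : (ℤ × ℤ) →+ ZMod 2) (n : ℤ × ℤ) :
    Matrix.SpecialLinearGroup (Fin 2) ℂ :=
  ⟨sgn ε n • !![1, (n.1 : ℂ) + (n.2 : ℂ) * cs; 0, 1], rhoMat_det cs ε n⟩

/-- The entrywise complex conjugate `ρ̄` of `ρ`. -/
def rhoConjSL (cs : ℂ) (ε : (ℤ × ℤ) →+ ZMod 2) (n : ℤ × ℤ) :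
    Matrix.SpecialLinearGroup (Fin 2) ℂ :=
  Matrix.SpecialLinearGroup.map (starRingEnd ℂ) (rhoSL cs ε n)

/-- The action of `(n₁,n₂) ∈ ℤ²` on `W_{k₁,k₂} = V_{k₁} ⊗ V_{k₂}` by
`Sym^{k₁}(ρ(n₁,n₂)) ⊗ Sym^{k₂}(ρ̄(n₁,n₂))`. -/
def Wact (k₁ k₂ : ℕ) (cs : ℂ) (ε : (ℤ × ℤ) →+ ZMod 2) (n : ℤ × ℤ) :
    (Vhom k₁ ⊗[ℂ] Vhom k₂) →ₗ[ℂ] (Vhom k₁ ⊗[ℂ] Vhom k₂) :=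
  TensorProduct.map (SymSL k₁ (rhoSL cs ε n)) (SymSL k₂ (rhoConjSL cs ε n))

/-- The subspace of `W_{k₁,k₂}` of vectors fixed by every element of `ℤ²`. -/
def Wfixed (k₁ k₂ : ℕ) (cs : ℂ) (ε : (ℤ × ℤ) →+ ZMod 2) :
    Submodule ℂ (Vhom k₁ ⊗[ℂ] Vhom k₂) where
  carrier := {w | ∀ n : ℤ × ℤ, Wact k₁ k₂ cs ε n w = w}
  add_mem' := fun ha hb n => by rw [map_add, ha n, hb n]
  zero_mem' := fun n => map_zero _
  smul_mem' := fun c w hw n => by rw [_root_.map_smul, hw n]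

/-- The monomial `X^{k₁} ⊗ X^{k₂} ∈ V_{k₁} ⊗ V_{k₂}`. -/
def Wmonomial (k₁ k₂ : ℕ) : Vhom k₁ ⊗[ℂ] Vhom k₂ :=
  (⟨(X 0 : MvPolynomial (Fin 2) ℂ) ^ k₁,
      (MvPolynomial.mem_homogeneousSubmodule _ _).2
        (by simpa using (MvPolynomial.isHomogeneous_X ℂ (0 : Fin 2)).pow k₁)⟩ : Vhom k₁) ⊗ₜ[ℂ]
    (⟨(X 0 : MvPolynomial (Fin 2) ℂ) ^ k₂,
      (MvPolynomial.mem_homogeneousSubmodule _ _).2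
        (by simpa using (MvPolynomial.isHomogeneous_X ℂ (0 : Fin 2)).pow k₂)⟩ : Vhom k₂)

/-!
Setting `X = 1` in both tensor factors embeds `W_{k₁,k₂}` into the polynomials in two affine
coordinates. It sends the monomial `X^{k₁} ⊗ X^{k₂}` to `1`, and turns the action of `n` into
translation by `(τ, τ̄)`, `τ = n₁ + n₂·cs`, times the sign `(−1)^{ε(n)(k₁ + k₂)}`. A polynomial that
is invariant under a translation is constant along the direction of that translation. So if all
signs are `1`, a fixed vector is constant, because the vectors `(1, 1)` and `(cs, c̄s)` span `ℂ²`
when `cs` is not real; and a single sign `-1` makes a fixed vector equal to its own negative.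
-/

open scoped Polynomial Polynomial.Bivariate

lemma polynomial_eval_aeval {σ R : Type*} [CommSemiring R] (f : σ → R[X]) (p : MvPolynomial σ R)
    (z : R) : (aeval f p).eval z = eval (fun i => (f i).eval z) p := by
  rw [← Polynomial.coe_aeval_eq_eval, comp_aeval_apply, aeval_eq_eval]

section TranslationInvariance

variable {σ R : Type*} [CommRing R] [IsDomain R] [CharZero R] {F : MvPolynomial σ R}

lemma periodic_eval_smul {v : σ → R} (hv : Function.Periodic (eval · F) v) (z : R) :
    Function.Periodic (eval · F) (z • v) := by
  intro x
  let line : R[X] := aeval (fun i => Polynomial.C (x i) + Polynomial.C (v i) * Polynomial.X) F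
  have eval_line (z : R) : line.eval z = eval (x + z • v) F := by
    rw [polynomial_eval_aeval]
    congr 2 with i
    simp [mul_comm z]
  -- `line` takes the value `F(x)` at every natural number.
  have line_eq : line = Polynomial.C (eval x F) := by
    refine line.eq_of_infinite_eval_eq _ <|
      (Set.infinite_range_of_injective Nat.cast_injective).mono ?_
    rintro _ ⟨n, rfl⟩
    simpa [eval_line, Nat.cast_smul_eq_nsmul] using hv.nsmul n x
  simpa [line_eq] using (eval_line z).symm

lemma eq_C_of_periodic_eval_of_span_eq_top {s : Set (σ → R)}
    (hs : ∀ v ∈ s, Function.Periodic (eval · F) v) (hspan : Submodule.span R s = ⊤) :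
    F = C (eval 0 F) := by
  have periodic (v : σ → R) : Function.Periodic (eval · F) v := by
    induction (hspan ▸ Submodule.mem_top : v ∈ Submodule.span R s) using
      Submodule.span_induction with
    | mem v hv => exact hs v hv
    | zero => exact Function.periodic_with_period_zero _
    | add v w _ _ hv hw => exact hv.add_period hw
    | smul z v _ hv => exact periodic_eval_smul hv z
  exact MvPolynomial.funext fun x => by simpa using (periodic x).eq

end TranslationInvariance

lemma eq_zero_of_antiperiodic_eval {σ K : Type*} [Field K] [CharZero K] {F : MvPolynomial σ K}
    {v : σ → K} (hv : Function.Antiperiodic (eval · F) v) : F = 0 := by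
  have half_two_smul : (2⁻¹ : K) • 2 • v = v := by
    rw [← ofNat_smul_eq_nsmul K, inv_smul_smul₀ two_ne_zero]
  have hperiodic : Function.Periodic (eval · F) v :=
    half_two_smul ▸ periodic_eval_smul hv.periodic 2⁻¹
  refine MvPolynomial.funext fun x => ?_
  simpa [self_eq_neg] using (hperiodic x).symm.trans (hv x)

section Dehomogenization

lemma eval_smul_of_isHomogeneous {σ R : Type*} [CommSemiring R] {p : MvPolynomial σ R} {k : ℕ}
    (hp : p.IsHomogeneous k) (c : R) (x : σ → R) : eval (c • x) p = c ^ k * eval x p := by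
  rw [eval_eq, eval_eq, Finset.mul_sum]
  refine Finset.sum_congr rfl fun d hd => ?_
  have hdeg : ∑ i ∈ d.support, d i = k := by
    by_contra hne
    exact mem_support_iff.1 hd (hp.coeff_eq_zero hne)
  simp only [Pi.smul_apply, smul_eq_mul, mul_pow, Finset.prod_mul_distrib,
    Finset.prod_pow_eq_pow_sum, hdeg]
  ring

lemma eq_zero_of_aeval_one_X_eq_zero {R : Type*} [CommSemiring R] {p : MvPolynomial (Fin 2) R}
    {k : ℕ} (hp : p.IsHomogeneous k) (h : aeval ![1, (Polynomial.X : R[X])] p = 0) : p = 0 := by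
  have hswap : aeval ![(Polynomial.X : R[X]), 1] (rename (Equiv.swap 0 1) p) = 0 := by
    rw [aeval_rename, ← h]
    congr 2
    ext i
    fin_cases i <;> simp
  apply rename_injective _ (Equiv.swap (0 : Fin 2) 1).injective
  rw [map_zero, ← Polynomial.homogenize_eq_of_isHomogeneous
    hp.rename_isHomogeneous hswap, Polynomial.homogenize_zero]

/-- The dehomogenization `P ↦ P(1, X)` of binary forms of degree `k`: the variable of `ℂ[X]` is the
second variable of the form. -/
def dehomogenize (k : ℕ) : Vhom k →ₗ[ℂ] ℂ[X] :=
  (aeval ![1, Polynomial.X]).toLinearMap ∘ₗ (Vhom k).subtype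

lemma eval_dehomogenize {k : ℕ} (p : Vhom k) (s : ℂ) :
    (dehomogenize k p).eval s = eval ![1, s] p.1 := by
  rw [dehomogenize, LinearMap.comp_apply, AlgHom.toLinearMap_apply, polynomial_eval_aeval]
  congr 2 with i
  fin_cases i <;> simp

lemma dehomogenize_injective (k : ℕ) : Function.Injective (dehomogenize k) :=
  (injective_iff_map_eq_zero _).2 fun p hp => Subtype.ext <|
    eq_zero_of_aeval_one_X_eq_zero ((mem_homogeneousSubmodule _ _).1 p.2) hp

lemma eval_substMap (A : Matrix (Fin 2) (Fin 2) ℂ) (p : MvPolynomial (Fin 2) ℂ) (x : Fin 2 → ℂ) :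
    eval x (substMap A p) = eval (x ᵥ* A) p := by
  rw [substMap, ← aeval_eq_eval, comp_aeval_apply, aeval_eq_eval]
  congr 2 with i
  simp [vecMul, dotProduct, mul_comm]

lemma eval_dehomogenize_SymSL {k : ℕ} {A : Matrix.SpecialLinearGroup (Fin 2) ℂ} {c t : ℂ}
    (hA : A.1 = c • !![1, t; 0, 1]) (p : Vhom k) (s : ℂ) :
    (dehomogenize k (SymSL k A p)).eval s = c ^ k * (dehomogenize k p).eval (s + t) := by
  have hp : p.1.IsHomogeneous k := (mem_homogeneousSubmodule _ _).1 p.2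
  rw [eval_dehomogenize, eval_dehomogenize, ← eval_smul_of_isHomogeneous hp]
  have hvec : ![1, s] ᵥ* A.1 = c • ![1, s + t] := by
    ext i
    fin_cases i <;> simp [hA]
    ring
  rw [← hvec]
  exact eval_substMap A.1 p.1 ![1, s]

lemma eval_equivMvPolynomial {R : Type*} [CommSemiring R] (p : R[X][Y]) (x : Fin 2 → R) :
    eval x (Polynomial.Bivariate.equivMvPolynomial R p) = p.evalEval (x 0) (x 1) := by
  have hcomp : (aeval x).comp (Polynomial.Bivariate.equivMvPolynomial R).toAlgHom =
      Polynomial.aevalAeval (x 0) (x 1) :=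
    (Polynomial.aevalAevalEquiv R R).symm.injective (by simp)
  rw [← Polynomial.coe_aevalAeval_eq_evalEval, ← hcomp]
  rfl

/-- The dehomogenization `P ⊗ Q ↦ P(1, X₀) Q(1, X₁)` in both factors of `V_{k₁} ⊗ V_{k₂}`. -/
def bidehomogenize (k₁ k₂ : ℕ) : Vhom k₁ ⊗[ℂ] Vhom k₂ →ₗ[ℂ] MvPolynomial (Fin 2) ℂ :=
  ((polyEquivTensor ℂ ℂ[X]).symm.trans
    (Polynomial.Bivariate.equivMvPolynomial ℂ)).toLinearMap ∘ₗ
    TensorProduct.map (dehomogenize k₁) (dehomogenize k₂)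

lemma bidehomogenize_injective (k₁ k₂ : ℕ) : Function.Injective (bidehomogenize k₁ k₂) :=
  ((polyEquivTensor ℂ ℂ[X]).symm.trans (Polynomial.Bivariate.equivMvPolynomial ℂ)).injective.comp <|
    TensorProduct.map_injective_of_flat_flat _ _
      (dehomogenize_injective k₁) (dehomogenize_injective k₂)

lemma eval_bidehomogenize_tmul {k₁ k₂ : ℕ} (p : Vhom k₁) (q : Vhom k₂) (x : Fin 2 → ℂ) :
    eval x (bidehomogenize k₁ k₂ (p ⊗ₜ q)) =
      (dehomogenize k₁ p).eval (x 0) * (dehomogenize k₂ q).eval (x 1) := by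
  have bidehomogenize_tmul : bidehomogenize k₁ k₂ (p ⊗ₜ q) =
      Polynomial.Bivariate.equivMvPolynomial ℂ
        (Polynomial.C (dehomogenize k₁ p) * (dehomogenize k₂ q).map Polynomial.C) := by
    rw [← Polynomial.smul_eq_C_mul]
    rfl
  rw [bidehomogenize_tmul, eval_equivMvPolynomial, Polynomial.evalEval_mul, Polynomial.evalEval_C,
    Polynomial.evalEval_map_C]

lemma bidehomogenize_Wmonomial (k₁ k₂ : ℕ) : bidehomogenize k₁ k₂ (Wmonomial k₁ k₂) = 1 := by
  refine MvPolynomial.funext fun x => ?_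
  simp [Wmonomial, eval_bidehomogenize_tmul, eval_dehomogenize]

lemma Wmonomial_ne_zero (k₁ k₂ : ℕ) : Wmonomial k₁ k₂ ≠ 0 := by
  rw [← (bidehomogenize_injective k₁ k₂).ne_iff, bidehomogenize_Wmonomial, map_zero]
  exact one_ne_zero

end Dehomogenization

section FixedVectors

variable {k₁ k₂ : ℕ} {cs : ℂ} {ε : (ℤ × ℤ) →+ ZMod 2}

lemma rhoConjSL_val (cs : ℂ) (ε : (ℤ × ℤ) →+ ZMod 2) (n : ℤ × ℤ) :
    (rhoConjSL cs ε n).1 = sgn ε n • !![1, n.1 + n.2 * starRingEnd ℂ cs; 0, 1] := by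
  have conj_sgn : starRingEnd ℂ (sgn ε n) = sgn ε n := by
    rw [sgn, apply_ite (starRingEnd ℂ), map_neg, map_one]
  rw [rhoConjSL, SpecialLinearGroup.map_apply_coe]
  ext i j
  fin_cases i <;> fin_cases j <;> simp [rhoSL, conj_sgn]

/-- The translation vector `(τ, τ̄)`, `τ = n₁ + n₂·cs`, by which `n` acts on the two affine
coordinates after dehomogenization. -/
def latticeVec (cs : ℂ) (n : ℤ × ℤ) : Fin 2 → ℂ :=
  ![n.1 + n.2 * cs, n.1 + n.2 * starRingEnd ℂ cs]

lemma eval_bidehomogenize_Wact (n : ℤ × ℤ) (w : Vhom k₁ ⊗[ℂ] Vhom k₂) (x : Fin 2 → ℂ) :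
    eval x (bidehomogenize k₁ k₂ (Wact k₁ k₂ cs ε n w)) =
      sgn ε n ^ (k₁ + k₂) * eval (x + latticeVec cs n) (bidehomogenize k₁ k₂ w) := by
  induction w using TensorProduct.induction_on with
  | zero => simp
  | tmul p q =>
    rw [Wact, TensorProduct.map_tmul, eval_bidehomogenize_tmul, eval_bidehomogenize_tmul,
      eval_dehomogenize_SymSL rfl, eval_dehomogenize_SymSL (rhoConjSL_val cs ε n)]
    simp only [latticeVec, Pi.add_apply, cons_val_zero, cons_val_one]
    ring
  | add w w' hw hw' => simp only [map_add, hw, hw', mul_add]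

lemma mem_Wfixed_iff {w : Vhom k₁ ⊗[ℂ] Vhom k₂} :
    w ∈ Wfixed k₁ k₂ cs ε ↔ ∀ n x, sgn ε n ^ (k₁ + k₂) *
      eval (x + latticeVec cs n) (bidehomogenize k₁ k₂ w) = eval x (bidehomogenize k₁ k₂ w) := by
  refine forall_congr' fun n => ?_
  rw [← (bidehomogenize_injective k₁ k₂).eq_iff, MvPolynomial.funext_iff]
  simp only [eval_bidehomogenize_Wact]

lemma Wfixed_eq_bot_of_sgn_pow_eq_neg_one {n : ℤ × ℤ} (hn : sgn ε n ^ (k₁ + k₂) = -1) :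
    Wfixed k₁ k₂ cs ε = ⊥ := by
  refine (Submodule.eq_bot_iff _).2 fun w hw => bidehomogenize_injective k₁ k₂ ?_
  rw [map_zero]
  refine eq_zero_of_antiperiodic_eval (v := latticeVec cs n) fun x => ?_
  have hfixed := mem_Wfixed_iff.1 hw n x
  rw [hn] at hfixed
  linear_combination -hfixed

lemma span_latticeVec_eq_top (hcs : cs ∉ Set.range ((↑) : ℝ → ℂ)) :
    Submodule.span ℂ (Set.range (latticeVec cs)) = ⊤ := by
  have det_ne_zero : (!![1, 1; cs, starRingEnd ℂ cs]).det ≠ 0 := by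
    rw [det_fin_two_of, one_mul, one_mul, sub_ne_zero]
    exact fun h => hcs (Complex.conj_eq_iff_real.1 h |>.imp fun _ => Eq.symm)
  have basis_span : Submodule.span ℂ (Set.range !![1, 1; cs, starRingEnd ℂ cs].row) = ⊤ :=
    (linearIndependent_rows_of_det_ne_zero det_ne_zero).span_eq_top_of_card_eq_finrank' (by simp)
  rw [← top_le_iff, ← basis_span]
  refine Submodule.span_mono (Set.range_subset_iff.2 fun i => ?_)
  fin_cases i
  · exact ⟨(1, 0), by simp [latticeVec]⟩
  · exact ⟨(0, 1), by simp [latticeVec]⟩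

lemma Wfixed_eq_span_of_sgn_pow_eq_one (hcs : cs ∉ Set.range ((↑) : ℝ → ℂ))
    (hsgn : ∀ n, sgn ε n ^ (k₁ + k₂) = 1) :
    Wfixed k₁ k₂ cs ε = Submodule.span ℂ {Wmonomial k₁ k₂} := by
  ext w
  rw [Submodule.mem_span_singleton]
  constructor
  · intro hw
    have hperiodic : ∀ v ∈ Set.range (latticeVec cs),
        Function.Periodic (eval · (bidehomogenize k₁ k₂ w)) v := by
      rintro _ ⟨n, rfl⟩ x
      simpa [hsgn n] using mem_Wfixed_iff.1 hw n x
    have hconst := eq_C_of_periodic_eval_of_span_eq_top hperiodic (span_latticeVec_eq_top hcs)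
    refine ⟨eval 0 (bidehomogenize k₁ k₂ w), bidehomogenize_injective k₁ k₂ ?_⟩
    rw [map_smul, bidehomogenize_Wmonomial, hconst, eval_C, smul_eq_C_mul, mul_one]
  · rintro ⟨c, rfl⟩
    simp [mem_Wfixed_iff, hsgn, bidehomogenize_Wmonomial]

end FixedVectors

theorem Wfixed_eq_bot_or_span_general (k₁ k₂ : ℕ) (cs : ℂ) (ε : (ℤ × ℤ) →+ ZMod 2) :
    (Odd (k₁ + k₂) → ε ≠ 0 → Wfixed k₁ k₂ cs ε = ⊥) ∧
    (Even (k₁ + k₂) ∨ ε = 0 → cs ∉ Set.range ((↑) : ℝ → ℂ) →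
      Wfixed k₁ k₂ cs ε = Submodule.span ℂ {Wmonomial k₁ k₂} ∧ Wmonomial k₁ k₂ ≠ 0) := by
  refine ⟨fun hodd hε => ?_, fun h hcs =>
    ⟨Wfixed_eq_span_of_sgn_pow_eq_one hcs fun n => ?_, Wmonomial_ne_zero k₁ k₂⟩⟩
  · obtain ⟨n, hn : ε n ≠ 0⟩ := DFunLike.ne_iff.1 hε
    refine Wfixed_eq_bot_of_sgn_pow_eq_neg_one (n := n) ?_
    rw [sgn, if_neg hn, hodd.neg_one_pow]
  · obtain heven | rfl := h
    · rw [sgn]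
      split_ifs
      exacts [one_pow _, heven.neg_one_pow]
    · simp [sgn]

/-- The subspace of `W_{k₁,k₂}` of vectors fixed by every element of `ℤ²` is
zero if `k₁ + k₂` is odd, and is one-dimensional, spanned by the monomial `X^{k₁} ⊗ X^{k₂}`,
if `k₁ + k₂` is even. -/
theorem Wfixed_eq_bot_or_span (k₁ k₂ : ℕ) (cs : ℂ)
    (hcs : cs ∉ Set.range ((↑) : ℝ → ℂ)) (ε : (ℤ × ℤ) →+ ZMod 2)
    (hε : Function.Surjective ε) :
    (Odd (k₁ + k₂) → Wfixed k₁ k₂ cs ε = ⊥) ∧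
    (Even (k₁ + k₂) →
      Wfixed k₁ k₂ cs ε = Submodule.span ℂ {Wmonomial k₁ k₂} ∧ Wmonomial k₁ k₂ ≠ 0) := by
  obtain ⟨hodd, heven⟩ := Wfixed_eq_bot_or_span_general k₁ k₂ cs ε
  exact ⟨fun h => hodd h (by rintro rfl; simpa using hε 1), fun h => heven (.inl h) hcs⟩
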